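/- In the state φ₀, the usual position–momentum uncertainty product equals (ħ/2)|A||B|; concretely, √(∫_ℝ (x−a)²|φ₀(x)|² dx) · √(∫_ℝ |−iħφ₀′(x) − ηφ₀(x)|² dx) = (ħ/2)|A||B|. -/

import Mathlib

/-!
Since `Re (B / A) = 1 / ‖A‖²` and `‖c‖² = 1 / ‖A‖`, the density `‖φ‖²` is the normalised Gaussian
centred at `a` with variance `ħ‖A‖² / 2`, which evaluates the position integral. Differentiating
the exponential gives `-iħ φ' - η φ = i (B / A) (x - a) φ`, so the momentum integral is
`‖B / A‖²` times the position integral, and the product of the two square roots is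
`‖B / A‖ * (ħ‖A‖² / 2) = (ħ / 2) ‖A‖ ‖B‖`.
-/

open MeasureTheory Complex Real

lemma integral_sq_mul_exp_neg_mul_sq {b : ℝ} (hb : 0 < b) :
    ∫ x : ℝ, x ^ 2 * Real.exp (-b * x ^ 2) = √(π / b) / (2 * b) := by
  have h1 : ∫ x : ℝ, x ^ 2 * Real.exp (-b * x ^ 2)
      = 2 * ∫ x in Set.Ioi (0 : ℝ), x ^ 2 * Real.exp (-b * x ^ 2) := by
    rw [← integral_comp_abs (f := fun x : ℝ => x ^ 2 * Real.exp (-b * x ^ 2))]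
    simp only [sq_abs]
  have h2 := integral_rpow_mul_exp_neg_mul_rpow (p := 2) (q := 2) two_pos (by norm_num) hb
  simp only [Real.rpow_two] at h2
  have hG : Real.Gamma ((2 + 1) / 2) = √π / 2 := by
    rw [show ((2 : ℝ) + 1) / 2 = 1 / 2 + 1 by norm_num, Real.Gamma_add_one (by norm_num),
      Real.Gamma_one_half_eq]
    ring
  have hp : b ^ (-(2 + 1) / 2 : ℝ) = (√b)⁻¹ * b⁻¹ := by
    rw [show (-(2 + 1) / 2 : ℝ) = -(1 / 2) + -1 by norm_num, Real.rpow_add hb,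
      Real.rpow_neg hb.le, ← Real.sqrt_eq_rpow, Real.rpow_neg_one]
  rw [h1, h2, hG, hp, Real.sqrt_div pi_pos.le]
  have : √b ≠ 0 := (Real.sqrt_pos.2 hb).ne'
  field_simp

lemma rpow_neg_quarter_sq {t : ℝ} (ht : 0 < t) : (t ^ (-(1/4 : ℝ))) ^ 2 = (√t)⁻¹ := by
  rw [← Real.rpow_natCast, ← Real.rpow_mul ht.le, Real.sqrt_eq_rpow, ← Real.rpow_neg ht.le]
  norm_num

/-- In the state `φ₀`, the usual position–momentum uncertainty product equals
`(ħ/2)|A||B|`. -/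
theorem stmt_3 (hbar a η : ℝ) (hhbar : 0 < hbar) (A B c : ℂ)
    (hAB : (starRingEnd ℂ) A * B + (starRingEnd ℂ) B * A = 2)
    (hc : c ^ 2 = A⁻¹) (φ : ℝ → ℂ)
    (hφ : ∀ x : ℝ, φ x =
      (Real.pi ^ (-(1/4 : ℝ)) : ℝ) * (hbar ^ (-(1/4 : ℝ)) : ℝ) * c *
        Complex.exp (-B * ((x : ℂ) - a) ^ 2 / (2 * A * hbar) +
          Complex.I * η * ((x : ℂ) - a) / hbar)) :
    Real.sqrt (∫ x : ℝ, (x - a) ^ 2 * ‖φ x‖ ^ 2) *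
      Real.sqrt (∫ x : ℝ, ‖-Complex.I * hbar * deriv φ x - η * φ x‖ ^ 2) =
      hbar / 2 * ‖A‖ * ‖B‖ := by
  have hA : A ≠ 0 := by
    rintro rfl
    simp at hAB
  have hnA : 0 < ‖A‖ := norm_pos_iff.2 hA
  have hh : (hbar : ℂ) ≠ 0 := by exact_mod_cast hhbar.ne'
  have hre : (B / A).re = 1 / ‖A‖ ^ 2 := by
    have h := congrArg Complex.re hAB
    simp at h
    rw [Complex.div_re, ← Complex.normSq_eq_norm_sq, ← add_div]
    congr 1
    linarith
  have hc2 : ‖c‖ ^ 2 = ‖A‖⁻¹ := by rw [← norm_pow, hc, norm_inv]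
  set b : ℝ := 1 / (‖A‖ ^ 2 * hbar) with hbdef
  have hb : 0 < b := by positivity
  have hdens : ∀ x : ℝ, ‖φ x‖ ^ 2 =
      (√π)⁻¹ * (√hbar)⁻¹ * ‖A‖⁻¹ * Real.exp (-b * (x - a) ^ 2) := by
    intro x
    have hexp : (-B * ((x : ℂ) - a) ^ 2 / (2 * A * hbar) +
          Complex.I * η * ((x : ℂ) - a) / hbar) =
        ((-(x - a) ^ 2 / (2 * hbar) : ℝ) : ℂ) * (B / A) +
          ((η * (x - a) / hbar : ℝ) : ℂ) * Complex.I := by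
      push_cast
      field_simp
    rw [hφ x, hexp, norm_mul, norm_mul, norm_mul, Complex.norm_exp, mul_pow, mul_pow, mul_pow,
      hc2, Complex.norm_real, Complex.norm_real, Real.norm_eq_abs, Real.norm_eq_abs, sq_abs,
      sq_abs, rpow_neg_quarter_sq pi_pos, rpow_neg_quarter_sq hhbar, ← Real.exp_nat_mul,
      Complex.add_re, Complex.re_ofReal_mul, Complex.re_ofReal_mul, Complex.I_re, hre]
    congr 2
    rw [hbdef]
    push_cast
    field_simp
    ring
  have hM : ∫ x : ℝ, (x - a) ^ 2 * ‖φ x‖ ^ 2 = hbar * ‖A‖ ^ 2 / 2 := by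
    have h1 : ∀ x : ℝ, (x - a) ^ 2 * ‖φ x‖ ^ 2 = (√π)⁻¹ * (√hbar)⁻¹ * ‖A‖⁻¹ *
        ((x - a) ^ 2 * Real.exp (-b * (x - a) ^ 2)) := by
      intro x
      rw [hdens x]
      ring
    simp_rw [h1]
    rw [integral_const_mul,
      integral_sub_right_eq_self (fun x : ℝ => x ^ 2 * Real.exp (-b * x ^ 2)) a,
      integral_sq_mul_exp_neg_mul_sq hb]
    have hs : √(π / b) = √π * ‖A‖ * √hbar := by
      rw [hbdef, div_div_eq_mul_div, div_one, Real.sqrt_mul pi_pos.le,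
        Real.sqrt_mul (by positivity), Real.sqrt_sq hnA.le, mul_assoc]
    have := Real.sqrt_pos.2 hhbar
    have := Real.sqrt_pos.2 pi_pos
    rw [hs, hbdef]
    field_simp
  have hmom : ∀ x : ℝ, ‖-Complex.I * hbar * deriv φ x - η * φ x‖ ^ 2 =
      (‖B‖ / ‖A‖) ^ 2 * ((x - a) ^ 2 * ‖φ x‖ ^ 2) := by
    intro x
    have hder : HasDerivAt φ
        ((-B * ((x : ℂ) - a) / (A * hbar) + Complex.I * η / hbar) * φ x) x := by
      have hx : HasDerivAt (fun y : ℝ => (y : ℂ) - a) 1 x :=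
        (Complex.ofRealCLM.hasDerivAt (x := x)).sub_const (a : ℂ)
      have h := (((((hx.pow 2).const_mul (-B)).div_const (2 * A * hbar)).add
        ((hx.const_mul (Complex.I * η)).div_const (hbar : ℂ))).cexp).const_mul
        (((Real.pi ^ (-(1/4 : ℝ)) : ℝ) : ℂ) * (hbar ^ (-(1/4 : ℝ)) : ℝ) * c)
      rw [funext hφ]
      refine h.congr_deriv ?_
      simp only [Pi.add_apply, Pi.pow_apply]
      field_simp
      ring
    have hval : -Complex.I * hbar * deriv φ x - η * φ x =
        Complex.I * (B / A) * ((x - a : ℝ) : ℂ) * φ x := by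
      rw [hder.deriv]
      push_cast
      field_simp
      ring_nf
      simp only [Complex.I_sq]
      ring
    rw [hval]
    simp only [norm_mul, norm_div, Complex.norm_I, Complex.norm_real, Real.norm_eq_abs, mul_pow,
      sq_abs]
    ring
  simp_rw [hmom]
  rw [integral_const_mul, hM, Real.sqrt_mul (by positivity), Real.sqrt_sq (by positivity),
    mul_left_comm, Real.mul_self_sqrt (by positivity)]
  field_simp
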